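/- arXiv:2603.21671 — 2 statements merged into one kernel-verified Lean document; each statement's English description precedes it below -/
import Mathlib

section
/- Let f : ℝ^d → ℝ be a convex function. Then for every vector v ∈ ℝ^d and every nonnegative smooth compactly supported function φ : ℝ^d → ℝ, one has ∫_{ℝ^d} f(x) · ⟨v, (D²φ(x)) v⟩ dx ≥ 0, where D²φ(x) is the Hessian matrix of φ at x. In particular the distributional Laplacian of f is nonnegative: ∫_{ℝ^d} f(x) Δφ(x) dx ≥ 0 for all nonnegative φ ∈ C_c^∞(ℝ^d). -/
open MeasureTheory Filter Metric
open scoped Topology ENNReal NNReal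

/-- The second partial derivative `∂_i ∂_j φ` at `x`. -/
noncomputable def secondPartial (d : ℕ) (φ : EuclideanSpace ℝ (Fin d) → ℝ)
    (i j : Fin d) (x : EuclideanSpace ℝ (Fin d)) : ℝ :=
  fderiv ℝ (fun z => fderiv ℝ φ z (EuclideanSpace.single j 1)) x (EuclideanSpace.single i 1)

/-!
The function `y ↦ ∫ φ(t) f(t - y) dt` is the convolution of `φ` with the reflection of `f`. As an
average of translates of a convex function it is convex, so its second derivative along `v` is
nonnegative. Derivatives of a convolution may be put on the factor `φ`, and at `y = 0` the result
is `∫ f ⟨v, D²φ v⟩`. The Laplacian is the sum of these integrals over an orthonormal basis.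
-/

open scoped Convolution

theorem convexOn_integral {α E : Type*} [MeasurableSpace α] {μ : Measure α} [AddCommMonoid E]
    [SMul ℝ E] {s : Set E} {F : E → α → ℝ} (hs : Convex ℝ s)
    (hF : ∀ᵐ a ∂μ, ConvexOn ℝ s (F · a)) (hint : ∀ x ∈ s, Integrable (F x) μ) :
    ConvexOn ℝ s (fun x => ∫ a, F x a ∂μ) := by
  refine ⟨hs, fun x hx y hy p q hp hq hpq => ?_⟩
  have hpx : Integrable (fun a => p • F x a) μ := (hint x hx).smul p
  have hqy : Integrable (fun a => q • F y a) μ := (hint y hy).smul q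
  calc ∫ a, F (p • x + q • y) a ∂μ
      ≤ ∫ a, (p • F x a + q • F y a) ∂μ := by
        refine integral_mono_ae (hint _ (hs hx hy hp hq hpq)) (hpx.add hqy) ?_
        filter_upwards [hF] with a ha using ha.2 hx hy hp hq hpq
    _ = p • ∫ a, F x a ∂μ + q • ∫ a, F y a ∂μ := by
        rw [integral_add hpx hqy, integral_smul, integral_smul]

theorem convexOn_convolution_of_nonneg {E : Type*} [AddCommGroup E] [Module ℝ E]
    [MeasurableSpace E] {μ : Measure E} {φ f : E → ℝ} (hφ : ∀ x, 0 ≤ φ x)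
    (hf : ConvexOn ℝ Set.univ f)
    (hφf : ConvolutionExists φ f (ContinuousLinearMap.lsmul ℝ ℝ) μ) :
    ConvexOn ℝ Set.univ (φ ⋆[ContinuousLinearMap.lsmul ℝ ℝ, μ] f) := by
  refine convexOn_integral convex_univ (.of_forall fun t => ?_) fun x _ => hφf x
  have hft : ConvexOn ℝ Set.univ (fun x => f (x - t)) := by
    simpa [Function.comp_def, sub_eq_add_neg] using hf.translate_left (-t)
  exact hft.smul (hφ t)

theorem fderiv_convolution_left_apply {𝕜 G E E' F : Type*} [RCLike 𝕜]
    [NormedAddCommGroup G] [NormedSpace 𝕜 G] [MeasurableSpace G] [BorelSpace G]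
    [NormedAddCommGroup E] [NormedSpace 𝕜 E] [NormedAddCommGroup E'] [NormedSpace 𝕜 E']
    [NormedAddCommGroup F] [NormedSpace ℝ F] [NormedSpace 𝕜 F]
    {μ : Measure G} [SFinite μ] [μ.IsAddLeftInvariant] [μ.IsNegInvariant]
    (L : E →L[𝕜] E' →L[𝕜] F) {φ : G → E} {f : G → E'} (hφ : ContDiff 𝕜 1 φ)
    (hφc : HasCompactSupport φ) (hf : LocallyIntegrable f μ) (x v : G) :
    fderiv 𝕜 (φ ⋆[L, μ] f) x v = ((fun z => fderiv 𝕜 φ z v) ⋆[L, μ] f) x := by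
  rw [← convolution_flip, (hφc.hasFDerivAt_convolution_right L.flip hf hφ x).fderiv,
    convolution_precompR_apply L.flip hf (hφc.fderiv 𝕜) (hφ.continuous_fderiv one_ne_zero),
    convolution_flip]

theorem contDiff_fderiv_apply_const {𝕜 E F : Type*} [NontriviallyNormedField 𝕜]
    [NormedAddCommGroup E] [NormedSpace 𝕜 E] [NormedAddCommGroup F] [NormedSpace 𝕜 F]
    {m n : WithTop ℕ∞} {φ : E → F} (hφ : ContDiff 𝕜 n φ) (hmn : m + 1 ≤ n) (v : E) :
    ContDiff 𝕜 m (fun z => fderiv 𝕜 φ z v) :=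
  (hφ.fderiv_right hmn).clm_apply contDiff_const

section SecondDerivative

variable {E : Type*} [NormedAddCommGroup E] [NormedSpace ℝ E]

theorem fderiv_fderiv_apply_nonneg_of_convexOn {g : E → ℝ} (hg : ConvexOn ℝ Set.univ g)
    (hg' : Differentiable ℝ g) {x v : E}
    (hg'' : DifferentiableAt ℝ (fun z => fderiv ℝ g z v) x) :
    0 ≤ fderiv ℝ (fun z => fderiv ℝ g z v) x v := by
  have hline (s : ℝ) : HasDerivAt (fun s : ℝ => x + s • v) v s := by
    simpa using ((hasDerivAt_id s).smul_const v).const_add x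
  have hderiv (s : ℝ) : HasDerivAt (fun s : ℝ => g (x + s • v)) (fderiv ℝ g (x + s • v) v) s :=
    (hg' _).hasFDerivAt.comp_hasDerivAt s (hline s)
  have hconvex : ConvexOn ℝ Set.univ (fun s : ℝ => g (x + s • v)) := by
    simpa [Function.comp_def, AffineMap.lineMap_apply, add_comm] using
      hg.comp_affineMap (AffineMap.lineMap x (x + v))
  have hmono : Monotone (fun s : ℝ => fderiv ℝ g (x + s • v) v) := by
    simpa [monotoneOn_univ, funext fun s => (hderiv s).deriv] using
      hconvex.monotoneOn_deriv fun s _ => (hderiv s).differentiableAt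
  have hderiv₂ : HasDerivAt (fun s : ℝ => fderiv ℝ g (x + s • v) v)
      (fderiv ℝ (fun z => fderiv ℝ g z v) x v) 0 :=
    hg''.hasFDerivAt.comp_hasDerivAt_of_eq 0 (hline 0) (by simp)
  exact hderiv₂.nonneg_of_monotone hmono

variable [MeasurableSpace E] {μ : Measure E} {f φ : E → ℝ}

theorem integrable_mul_fderiv_fderiv_apply [OpensMeasurableSpace E]
    [IsFiniteMeasureOnCompacts μ] (hf : Continuous f) (hφ : ContDiff ℝ 2 φ)
    (hφc : HasCompactSupport φ) (v : E) :
    Integrable (fun x => f x * fderiv ℝ (fun z => fderiv ℝ φ z v) x v) μ := by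
  have hφ' : ContDiff ℝ 1 (fun z => fderiv ℝ φ z v) :=
    contDiff_fderiv_apply_const hφ (by norm_num) v
  have hφ'' : Continuous (fun x => fderiv ℝ (fun z => fderiv ℝ φ z v) x v) :=
    (contDiff_fderiv_apply_const hφ' (zero_add 1).le v).continuous
  exact (hf.mul hφ'').integrable_of_hasCompactSupport
    ((hφc.fderiv_apply ℝ v).fderiv_apply ℝ v).mul_left

variable [BorelSpace E] [FiniteDimensional ℝ E] [μ.IsAddHaarMeasure]

theorem integral_mul_fderiv_fderiv_apply_nonneg (hf : ConvexOn ℝ Set.univ f)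
    (hφ : ContDiff ℝ 2 φ) (hφc : HasCompactSupport φ) (hφ0 : ∀ x, 0 ≤ φ x) (v : E) :
    0 ≤ ∫ x, f x * fderiv ℝ (fun z => fderiv ℝ φ z v) x v ∂μ := by
  let L := ContinuousLinearMap.lsmul ℝ ℝ (E := ℝ)
  let fneg : E → ℝ := fun x => f (-x)
  have hfneg : ConvexOn ℝ Set.univ fneg := hf.comp_linearMap (-LinearMap.id)
  have hloc : LocallyIntegrable fneg μ := hfneg.locallyLipschitz.continuous.locallyIntegrable
  have hφ1 : ContDiff ℝ 1 φ := hφ.of_le (by norm_num)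
  have hφ' : ContDiff ℝ 1 (fun z => fderiv ℝ φ z v) :=
    contDiff_fderiv_apply_const hφ (by norm_num) v
  have hφc' : HasCompactSupport (fun z => fderiv ℝ φ z v) := hφc.fderiv_apply ℝ v
  have hconvex : ConvexOn ℝ Set.univ (φ ⋆[L, μ] fneg) :=
    convexOn_convolution_of_nonneg hφ0 hfneg (hφc.convolutionExists_left L hφ.continuous hloc)
  have hdiff : Differentiable ℝ (φ ⋆[L, μ] fneg) := fun x =>
    (hφc.hasFDerivAt_convolution_left L hφ1 hloc x).differentiableAt
  have hfderiv : (fun z => fderiv ℝ (φ ⋆[L, μ] fneg) z v) =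
      ((fun z => fderiv ℝ φ z v) ⋆[L, μ] fneg) :=
    funext fun z => fderiv_convolution_left_apply L hφ1 hφc hloc z v
  have hdiff' : DifferentiableAt ℝ (fun z => fderiv ℝ (φ ⋆[L, μ] fneg) z v) 0 :=
    hfderiv ▸ (hφc'.hasFDerivAt_convolution_left L hφ' hloc 0).differentiableAt
  calc 0 ≤ fderiv ℝ (fun z => fderiv ℝ (φ ⋆[L, μ] fneg) z v) 0 v :=
        fderiv_fderiv_apply_nonneg_of_convexOn hconvex hdiff hdiff'
    _ = ((fun x => fderiv ℝ (fun z => fderiv ℝ φ z v) x v) ⋆[L, μ] fneg) 0 := by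
        rw [hfderiv, fderiv_convolution_left_apply L hφ' hφc' hloc]
    _ = ∫ x, f x * fderiv ℝ (fun z => fderiv ℝ φ z v) x v ∂μ := by
        simp [convolution_def, L, fneg, mul_comm]

theorem convex_distributional_hessian_nonneg_general {ι : Type*} (s : Finset ι) (v : ι → E)
    (hf : ConvexOn ℝ Set.univ f) (hφ : ContDiff ℝ 2 φ) (hφc : HasCompactSupport φ)
    (hφ0 : ∀ x, 0 ≤ φ x) :
    0 ≤ ∫ x, f x * ∑ i ∈ s, fderiv ℝ (fun z => fderiv ℝ φ z (v i)) x (v i) ∂μ := by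
  have hfc : Continuous f := hf.locallyLipschitz.continuous
  simp only [Finset.mul_sum]
  rw [integral_finsetSum s fun i _ => integrable_mul_fderiv_fderiv_apply hfc hφ hφc (v i)]
  exact Finset.sum_nonneg fun i _ => integral_mul_fderiv_fderiv_apply_nonneg hf hφ hφc hφ0 (v i)

end SecondDerivative

/-- For a convex `f`, the distributional second derivative in any direction `v`,
namely `∫ f(x) ⟨v, D²φ(x) v⟩ dx`, is nonnegative for nonnegative test functions `φ`;
in particular the distributional Laplacian of `f` is nonnegative. -/
theorem convex_distributional_hessian_nonneg (d : ℕ)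
    (f : EuclideanSpace ℝ (Fin d) → ℝ) (hf : ConvexOn ℝ Set.univ f) :
    (∀ (v : EuclideanSpace ℝ (Fin d)) (φ : EuclideanSpace ℝ (Fin d) → ℝ),
        ContDiff ℝ (⊤ : ℕ∞) φ → HasCompactSupport φ → (∀ x, 0 ≤ φ x) →
        0 ≤ ∫ x, f x * fderiv ℝ (fun z => fderiv ℝ φ z v) x v) ∧
    (∀ φ : EuclideanSpace ℝ (Fin d) → ℝ,
        ContDiff ℝ (⊤ : ℕ∞) φ → HasCompactSupport φ → (∀ x, 0 ≤ φ x) →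
        0 ≤ ∫ x, f x * ∑ i, secondPartial d φ i i x) := by
  have two_le : (2 : WithTop ℕ∞) ≤ (⊤ : ℕ∞) := by norm_cast
  exact ⟨fun v φ hφ hφc hφ0 => by
      simpa using convex_distributional_hessian_nonneg_general {()} (fun _ => v) hf
        (hφ.of_le two_le) hφc hφ0,
    fun φ hφ hφc hφ0 => convex_distributional_hessian_nonneg_general Finset.univ
      (fun i => EuclideanSpace.single i 1) hf (hφ.of_le two_le) hφc hφ0⟩
end

section
/- Let f : ℝ^d → ℝ be a convex function of at most linear growth (|f(y)| ≤ A‖y‖ + B for all y). Let ν be the nonnegative locally finite Borel measure on ℝ^d with ∫ φ dν = (1/2) ∫_{ℝ^d} f(x) Δφ(x) dx for all φ ∈ C_c^∞(ℝ^d) (half the distributional Laplacian of f). For t > 0 let φ_t(y) = (2πt)^{−d/2} exp(−‖y‖²/(2t)) be the Gaussian heat kernel and (P_s h)(y) = ∫_{ℝ^d} h(y + z) φ_s(z) dz the heat semigroup. Then for every twice continuously differentiable compactly supported h : ℝ^d → ℝ and every t > 0: ∫_{ℝ^d} h(x) ((P_t f)(x) − f(x)) dx = ∫_0^t ∫_{ℝ^d}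 (P_s h)(y) ν(dy) ds. -/
open MeasureTheory Filter Metric
open scoped Topology ENNReal NNReal

/-- The `d`-dimensional Gaussian heat kernel `φ_t`. -/
noncomputable def heatKernel (d : ℕ) (t : ℝ) (y : EuclideanSpace ℝ (Fin d)) : ℝ :=
  (2 * Real.pi * t) ^ (-(d : ℝ) / 2) * Real.exp (-‖y‖ ^ 2 / (2 * t))

/-- The heat semigroup `(P_s h)(y) = ∫ h (y + z) φ_s(z) dz`. -/
noncomputable def heatSemigroup (d : ℕ) (s : ℝ) (h : EuclideanSpace ℝ (Fin d) → ℝ)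
    (y : EuclideanSpace ℝ (Fin d)) : ℝ :=
  ∫ z, h (y + z) * heatKernel d s z

/-- The Laplacian `Δφ` at `x`. -/
noncomputable def laplacian (d : ℕ) (φ : EuclideanSpace ℝ (Fin d) → ℝ)
    (x : EuclideanSpace ℝ (Fin d)) : ℝ :=
  ∑ i, secondPartial d φ i i x

/-!
Put `G(z) = ∫ f(x) h(x + z) dx`, a `C²` function of polynomial growth, as are its derivatives. By
Fubini and the symmetry of the heat kernel, `∫ h (P_t f - f) dx = P_t G(0) - G(0)`, and Dynkin's
formula turns this into `∫₀ᵗ P_s(ΔG / 2)(0) ds`. The definition of `ν`, tested against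
mollifications of `h`, gives `ΔG(z) / 2 = ∫ f(x) Δh(x + z) dx / 2 = ∫ h(y + z) ν(dy)` for almost
every `z`. A second use of Fubini identifies `P_s(ΔG / 2)(0)` with `∫ P_s h dν`; the growth of `ν`
that it needs comes from testing against translates of a bump function. Dynkin's formula follows by
differentiating the Gaussian means `r ↦ P_{r²} G(0)`, whose derivative is computed by Gaussian
integration by parts.
-/

open ContinuousLinearMap
open scoped Convolution ContDiff

/-- `g` grows at most polynomially: `‖g x‖ ≤ C (1 + ‖x‖) ^ n` for some `C` and `n`. The weight
`1 + ‖x‖` is submultiplicative under addition, which makes the class stable under translation. -/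
def HasPolynomialGrowth {E F : Type*} [NormedAddCommGroup E] [NormedAddCommGroup F]
    (g : E → F) : Prop :=
  ∃ (C : ℝ) (n : ℕ), ∀ x, ‖g x‖ ≤ C * (1 + ‖x‖) ^ n

theorem fderiv_convolution_right {E F F' G : Type*} [NormedAddCommGroup E] [NormedSpace ℝ E]
    [FiniteDimensional ℝ E] [MeasurableSpace E] [BorelSpace E] [NormedAddCommGroup F]
    [NormedSpace ℝ F] [NormedAddCommGroup F'] [NormedSpace ℝ F'] [NormedAddCommGroup G]
    [NormedSpace ℝ G] {μ : Measure E} [SFinite μ] [μ.IsAddLeftInvariant]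
    [μ.IsNegInvariant] {f : E → F} {g : E → F'} {L : F →L[ℝ] F' →L[ℝ] G}
    (hf : LocallyIntegrable f μ) (hg : ContDiff ℝ 1 g) (hgs : HasCompactSupport g) :
    fderiv ℝ (f ⋆[L, μ] g) = f ⋆[L.precompR E, μ] fderiv ℝ g :=
  funext fun x => (hgs.hasFDerivAt_convolution_right L hf hg x).fderiv

namespace HasPolynomialGrowth

section Normed

variable {E F F' : Type*} [NormedAddCommGroup E] [NormedAddCommGroup F] [NormedAddCommGroup F']

theorem of_norm_le_affine {g : E → F} {A B : ℝ} (hg : ∀ x, ‖g x‖ ≤ A * ‖x‖ + B) :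
    HasPolynomialGrowth g := by
  refine ⟨|A| + |B|, 1, fun x => (hg x).trans ?_⟩
  have hA : A * ‖x‖ ≤ |A| * ‖x‖ := mul_le_mul_of_nonneg_right (le_abs_self A) (norm_nonneg x)
  nlinarith [le_abs_self B, abs_nonneg A, mul_nonneg (abs_nonneg B) (norm_nonneg x)]

theorem id : HasPolynomialGrowth fun x : E => x :=
  ⟨1, 1, fun x => by linarith⟩

theorem of_norm_le {g : E → F} {k : E → F'} (hk : HasPolynomialGrowth k)
    (hgk : ∀ x, ‖g x‖ ≤ ‖k x‖) : HasPolynomialGrowth g :=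
  let ⟨C, n, hC⟩ := hk
  ⟨C, n, fun x => (hgk x).trans (hC x)⟩

theorem const_mul {g : E → ℝ} (hg : HasPolynomialGrowth g) (c : ℝ) :
    HasPolynomialGrowth fun x => c * g x := by
  obtain ⟨C, n, hC⟩ := hg
  refine ⟨‖c‖ * C, n, fun x => ?_⟩
  rw [norm_mul, mul_assoc]
  exact mul_le_mul_of_nonneg_left (hC x) (norm_nonneg c)

theorem clm_comp [NormedSpace ℝ F] [NormedSpace ℝ F'] {g : E → F} (hg : HasPolynomialGrowth g)
    (L : F →L[ℝ] F') : HasPolynomialGrowth fun x => L (g x) := by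
  obtain ⟨C, n, hC⟩ := hg
  refine ⟨‖L‖ * C, n, fun x => ?_⟩
  rw [mul_assoc]
  exact (L.le_opNorm _).trans (mul_le_mul_of_nonneg_left (hC x) (norm_nonneg L))

theorem comp_neg {g : E → F} (hg : HasPolynomialGrowth g) : HasPolynomialGrowth fun x => g (-x) :=
  let ⟨C, n, hC⟩ := hg
  ⟨C, n, fun x => by simpa only [norm_neg] using hC (-x)⟩

theorem mul {g k : E → ℝ} (hg : HasPolynomialGrowth g) (hk : HasPolynomialGrowth k) :
    HasPolynomialGrowth fun x => g x * k x := by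
  obtain ⟨C, n, hC⟩ := hg
  obtain ⟨D, m, hD⟩ := hk
  refine ⟨C * D, n + m, fun x => ?_⟩
  calc ‖g x * k x‖ = ‖g x‖ * ‖k x‖ := norm_mul _ _
    _ ≤ C * (1 + ‖x‖) ^ n * (D * (1 + ‖x‖) ^ m) :=
      mul_le_mul (hC x) (hD x) (norm_nonneg _) ((norm_nonneg _).trans (hC x))
    _ = C * D * (1 + ‖x‖) ^ (n + m) := by ring

theorem exists_norm_add_le {g : E → F} (hg : HasPolynomialGrowth g) :
    ∃ (C : ℝ) (n : ℕ), 0 ≤ C ∧ ∀ x y, ‖g (x + y)‖ ≤ C * (1 + ‖x‖) ^ n * (1 + ‖y‖) ^ n := by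
  obtain ⟨C, n, hC⟩ := hg
  have hC0 : 0 ≤ C := by simpa using (norm_nonneg _).trans (hC 0)
  refine ⟨C, n, hC0, fun x y => (hC (x + y)).trans ?_⟩
  rw [mul_assoc, ← mul_pow]
  gcongr
  nlinarith [norm_add_le x y, mul_nonneg (norm_nonneg x) (norm_nonneg y)]

theorem exists_norm_add_smul_le [NormedSpace ℝ E] {g : E → F} (hg : HasPolynomialGrowth g)
    (x : E) (R : ℝ) :
    ∃ (C : ℝ) (n : ℕ), ∀ r : ℝ, |r| ≤ R → ∀ w, ‖g (x + r • w)‖ ≤ C * (1 + ‖w‖) ^ n := by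
  obtain ⟨C, n, hC0, hC⟩ := hg.exists_norm_add_le
  refine ⟨C * (1 + ‖x‖) ^ n * (1 + R) ^ n, n, fun r hr w => (hC x (r • w)).trans ?_⟩
  have hw : 1 + ‖r • w‖ ≤ (1 + R) * (1 + ‖w‖) := by
    rw [norm_smul, Real.norm_eq_abs]
    nlinarith [abs_nonneg r, norm_nonneg w, mul_le_mul_of_nonneg_right hr (norm_nonneg w)]
  rw [mul_assoc _ ((1 + R) ^ n), ← mul_pow]
  gcongr

theorem comp_add_smul [NormedSpace ℝ E] {g : E → F} (hg : HasPolynomialGrowth g) (x : E) (r : ℝ) :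
    HasPolynomialGrowth fun w => g (x + r • w) :=
  let ⟨C, n, hC⟩ := hg.exists_norm_add_smul_le x |r|
  ⟨C, n, hC r le_rfl⟩

end Normed

section Convolution

variable {E F F' G : Type*} [NormedAddCommGroup E] [MeasurableSpace E] [BorelSpace E]
  [NormedAddCommGroup F] [NormedAddCommGroup F'] [NormedAddCommGroup G]
  {μ : Measure E} {f : E → F} {g : E → F'}

theorem locallyIntegrable [IsLocallyFiniteMeasure μ] (hf : HasPolynomialGrowth f)
    (hfm : AEStronglyMeasurable f μ) : LocallyIntegrable f μ := by
  obtain ⟨C, n, hC⟩ := hf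
  have hbound : Continuous fun x : E => C * (1 + ‖x‖) ^ n := by fun_prop
  exact hbound.locallyIntegrable.mono hfm (Eventually.of_forall fun x =>
    (hC x).trans (Real.le_norm_self _))

variable [NormedSpace ℝ F] [NormedSpace ℝ F'] [NormedSpace ℝ G]
  [μ.IsAddLeftInvariant] [μ.IsNegInvariant] [IsFiniteMeasureOnCompacts μ]

theorem convolution (hf : HasPolynomialGrowth f) (hg : Continuous g) (hgs : HasCompactSupport g)
    (L : F →L[ℝ] F' →L[ℝ] G) : HasPolynomialGrowth (f ⋆[L, μ] g) := by
  obtain ⟨C, n, -, hC⟩ := hf.exists_norm_add_le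
  have hint : Integrable (fun y => (1 + ‖y‖) ^ n * ‖g y‖) μ :=
    (Continuous.mul (by fun_prop) hg.norm).integrable_of_hasCompactSupport hgs.norm.mul_left
  refine ⟨‖L‖ * C * ∫ y, (1 + ‖y‖) ^ n * ‖g y‖ ∂μ, n, fun x => ?_⟩
  have hbound : ∀ y, ‖L (f (x - y)) (g y)‖ ≤
      ‖L‖ * C * (1 + ‖x‖) ^ n * ((1 + ‖y‖) ^ n * ‖g y‖) := fun y =>
    calc ‖L (f (x - y)) (g y)‖ ≤ ‖L‖ * ‖f (x + -y)‖ * ‖g y‖ := by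
          rw [← sub_eq_add_neg]; exact L.le_opNorm₂ _ _
      _ ≤ ‖L‖ * (C * (1 + ‖x‖) ^ n * (1 + ‖-y‖) ^ n) * ‖g y‖ := by gcongr; exact hC x (-y)
      _ = ‖L‖ * C * (1 + ‖x‖) ^ n * ((1 + ‖y‖) ^ n * ‖g y‖) := by rw [norm_neg]; ring
  calc ‖(f ⋆[L, μ] g) x‖ = ‖∫ y, L (f (x - y)) (g y) ∂μ‖ := by rw [convolution_eq_swap]
    _ ≤ ∫ y, ‖L‖ * C * (1 + ‖x‖) ^ n * ((1 + ‖y‖) ^ n * ‖g y‖) ∂μ :=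
      norm_integral_le_of_norm_le (hint.const_mul _) (Eventually.of_forall hbound)
    _ = ‖L‖ * C * (∫ y, (1 + ‖y‖) ^ n * ‖g y‖ ∂μ) * (1 + ‖x‖) ^ n := by
      rw [integral_const_mul]; ring

variable [NormedSpace ℝ E] [FiniteDimensional ℝ E]

theorem fderiv_convolution (hf : HasPolynomialGrowth f) (hfi : LocallyIntegrable f μ)
    (hg : ContDiff ℝ 1 g) (hgs : HasCompactSupport g) (L : F →L[ℝ] F' →L[ℝ] G) :
    HasPolynomialGrowth (fderiv ℝ (f ⋆[L, μ] g)) := by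
  rw [fderiv_convolution_right hfi hg hgs]
  exact hf.convolution (hg.continuous_fderiv one_ne_zero) (hgs.fderiv ℝ) _

theorem fderiv_fderiv_convolution (hf : HasPolynomialGrowth f) (hfi : LocallyIntegrable f μ)
    (hg : ContDiff ℝ 2 g) (hgs : HasCompactSupport g) (L : F →L[ℝ] F' →L[ℝ] G) :
    HasPolynomialGrowth (fderiv ℝ (fderiv ℝ (f ⋆[L, μ] g))) := by
  rw [fderiv_convolution_right hfi (hg.of_le one_le_two) hgs]
  exact hf.fderiv_convolution hfi (hg.fderiv_right le_rfl) (hgs.fderiv ℝ) _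

end Convolution

end HasPolynomialGrowth

section CrossCorrelation

/-- The cross-correlation `z ↦ ∫ f(x) h(x + z) μ(dx)` of `f` and `h`. The heat semigroup is the
cross-correlation with the heat kernel, and `1` in place of `f` gives the integrals of the
translates of `h` against `μ`. -/
noncomputable def crossCorrelation {E : Type*} [Add E] [MeasurableSpace E] (μ : Measure E)
    (f h : E → ℝ) (z : E) : ℝ :=
  ∫ x, f x * h (x + z) ∂μ

theorem integral_mul_crossCorrelation_comm {E : Type*} [AddCommMonoid E] [MeasurableSpace E]
    {μ ν : Measure E} [SFinite μ] [SFinite ν] {f g h : E → ℝ}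
    (hint : Integrable (fun p : E × E => f p.1 * g p.2 * h (p.1 + p.2)) (μ.prod ν)) :
    ∫ x, f x * crossCorrelation ν g h x ∂μ = ∫ z, g z * crossCorrelation μ f h z ∂ν := by
  simp only [crossCorrelation, ← integral_const_mul]
  calc ∫ x, ∫ z, f x * (g z * h (z + x)) ∂ν ∂μ = ∫ x, ∫ z, f x * g z * h (x + z) ∂ν ∂μ := by
        simp only [mul_assoc, add_comm]
    _ = ∫ z, ∫ x, f x * g z * h (x + z) ∂μ ∂ν := integral_integral_swap hint
    _ = ∫ z, ∫ x, g z * (f x * h (x + z)) ∂μ ∂ν := by simp only [mul_left_comm, mul_assoc]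

variable {E : Type*} [NormedAddCommGroup E] [MeasurableSpace E] [BorelSpace E]
  {μ ν : Measure E} {f g h : E → ℝ}

theorem crossCorrelation_eq_convolution [μ.IsNegInvariant] :
    crossCorrelation μ f h = (fun x => f (-x)) ⋆[lsmul ℝ ℝ, μ] h := by
  funext z
  rw [convolution_lsmul, ← integral_neg_eq_self]
  simp only [crossCorrelation, neg_neg, sub_neg_eq_add, smul_eq_mul, add_comm z]

theorem crossCorrelation_neg [μ.IsAddRightInvariant] (z : E) :
    crossCorrelation μ f h (-z) = crossCorrelation μ h f z := by
  rw [crossCorrelation, ← integral_add_right_eq_self _ z]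
  simp only [crossCorrelation, add_neg_cancel_right, mul_comm]

theorem HasPolynomialGrowth.crossCorrelation [μ.IsAddLeftInvariant] [μ.IsNegInvariant]
    [IsFiniteMeasureOnCompacts μ] (hf : HasPolynomialGrowth f) (hh : Continuous h)
    (hhs : HasCompactSupport h) : HasPolynomialGrowth (crossCorrelation μ f h) := by
  rw [crossCorrelation_eq_convolution]
  exact hf.comp_neg.convolution hh hhs _

theorem stronglyMeasurable_crossCorrelation [SecondCountableTopology E] [SFinite μ]
    (hf : StronglyMeasurable f) (hh : Continuous h) :
    StronglyMeasurable (crossCorrelation μ f h) := by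
  have huncurry : StronglyMeasurable fun p : E × E => f p.2 * h (p.2 + p.1) :=
    (hf.comp_measurable measurable_snd).mul (Continuous.stronglyMeasurable (by fun_prop))
  exact huncurry.integral_prod_right

theorem integrable_comp_add_right [IsFiniteMeasureOnCompacts μ] (hh : Continuous h)
    (hhs : HasCompactSupport h) (z : E) : Integrable (fun x => h (x + z)) μ :=
  Continuous.integrable_of_hasCompactSupport (by fun_prop)
    (hhs.comp_homeomorph (Homeomorph.addRight z))

theorem integrable_mul_mul_comp_add [SecondCountableTopology E] [SFinite μ] [SFinite ν]
    [IsFiniteMeasureOnCompacts ν] (hf : LocallyIntegrable f μ) (hg : Continuous g)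
    (hgs : HasCompactSupport g) (hh : Continuous h) (hhs : HasCompactSupport h) :
    Integrable (fun p : E × E => f p.1 * g p.2 * h (p.1 + p.2)) (μ.prod ν) := by
  obtain ⟨M, hM⟩ := hh.bounded_above_of_compact_support hhs
  let K : Set E := (fun p : E × E => p.1 - p.2) '' (tsupport h ×ˢ tsupport g)
  have hK : IsCompact K := (hhs.isCompact.prod hgs.isCompact).image (by fun_prop)
  have hprod : Integrable (fun p : E × E => K.indicator f p.1 * g p.2) (μ.prod ν) :=
    ((integrable_indicator_iff hK.measurableSet).2 (hf.integrableOn_isCompact hK)).mul_prod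
      (hg.integrable_of_hasCompactSupport hgs)
  refine (hprod.mul_bdd (c := M) (g := fun p => h (p.1 + p.2))
    (Continuous.aestronglyMeasurable (by fun_prop)) (Eventually.of_forall fun p => hM _)).congr
    (Eventually.of_forall fun ⟨x, z⟩ => ?_)
  by_cases hx : x ∈ K
  · simp only [Set.indicator_of_mem hx]
  · suffices g z * h (x + z) = 0 by simp only [mul_assoc, this, mul_zero]
    by_contra hne
    refine hx ⟨(x + z, z), ⟨subset_tsupport h (right_ne_zero_of_mul hne),
      subset_tsupport g (left_ne_zero_of_mul hne)⟩, add_sub_cancel_right x z⟩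

end CrossCorrelation

section CrossCorrelationDeriv

variable {E : Type*} [NormedAddCommGroup E] [NormedSpace ℝ E] [FiniteDimensional ℝ E]
  [MeasurableSpace E] [BorelSpace E] {μ : Measure E} [μ.IsAddHaarMeasure] {f h : E → ℝ}

theorem locallyIntegrable_comp_neg (hf : LocallyIntegrable f μ) :
    LocallyIntegrable (fun x => f (-x)) μ :=
  (locallyIntegrable_map_homeomorph (Homeomorph.neg E)).1 (by simpa using hf)

theorem contDiff_crossCorrelation_right {n : ℕ∞} (hf : LocallyIntegrable f μ) (hh : ContDiff ℝ n h)
    (hhs : HasCompactSupport h) : ContDiff ℝ n (crossCorrelation μ f h) := by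
  rw [crossCorrelation_eq_convolution]
  exact hhs.contDiff_convolution_right _ (locallyIntegrable_comp_neg hf) hh

theorem contDiff_crossCorrelation_left {n : ℕ∞} (hf : ContDiff ℝ n f) (hfs : HasCompactSupport f)
    (hh : LocallyIntegrable h μ) : ContDiff ℝ n (crossCorrelation μ f h) := by
  have hfs' : HasCompactSupport fun x => f (-x) := hfs.comp_homeomorph (Homeomorph.neg E)
  rw [crossCorrelation_eq_convolution]
  exact hfs'.contDiff_convolution_left _ (hf.comp contDiff_neg) hh

theorem hasCompactSupport_crossCorrelation (hfs : HasCompactSupport f)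
    (hhs : HasCompactSupport h) : HasCompactSupport (crossCorrelation μ f h) := by
  have hfs' : HasCompactSupport fun x => f (-x) := hfs.comp_homeomorph (Homeomorph.neg E)
  rw [crossCorrelation_eq_convolution]
  exact hfs'.convolution _ hhs

theorem HasPolynomialGrowth.fderiv_crossCorrelation (hf : HasPolynomialGrowth f)
    (hfi : LocallyIntegrable f μ) (hh : ContDiff ℝ 1 h) (hhs : HasCompactSupport h) :
    HasPolynomialGrowth (fderiv ℝ (_root_.crossCorrelation μ f h)) := by
  rw [crossCorrelation_eq_convolution]
  exact hf.comp_neg.fderiv_convolution (locallyIntegrable_comp_neg hfi) hh hhs _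

theorem HasPolynomialGrowth.fderiv_fderiv_crossCorrelation (hf : HasPolynomialGrowth f)
    (hfi : LocallyIntegrable f μ) (hh : ContDiff ℝ 2 h) (hhs : HasCompactSupport h) :
    HasPolynomialGrowth (fderiv ℝ (fderiv ℝ (_root_.crossCorrelation μ f h))) := by
  rw [crossCorrelation_eq_convolution]
  exact hf.comp_neg.fderiv_fderiv_convolution (locallyIntegrable_comp_neg hfi) hh hhs _

end CrossCorrelationDeriv

section Laplacian

variable {d : ℕ}

local notation "𝔼" => EuclideanSpace ℝ (Fin d)

/-- The trace `∑ i, H eᵢ eᵢ` of a bilinear form on `ℝ^d`, which turns the second derivative of a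
`C²` function into its Laplacian. -/
noncomputable def bilinearTrace (d : ℕ) :
    (EuclideanSpace ℝ (Fin d) →L[ℝ] EuclideanSpace ℝ (Fin d) →L[ℝ] ℝ) →L[ℝ] ℝ :=
  ∑ i, apply ℝ ℝ (EuclideanSpace.single i 1) ∘L apply ℝ _ (EuclideanSpace.single i 1)

theorem bilinearTrace_apply (H : 𝔼 →L[ℝ] 𝔼 →L[ℝ] ℝ) :
    bilinearTrace d H = ∑ i, H (EuclideanSpace.single i 1) (EuclideanSpace.single i 1) := by
  simp [bilinearTrace]

theorem fderiv_fderiv_apply {E : Type*} [NormedAddCommGroup E] [NormedSpace ℝ E] {φ : E → ℝ}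
    (hφ : ContDiff ℝ 2 φ) (x v w : E) :
    fderiv ℝ (fun z => fderiv ℝ φ z v) x w = fderiv ℝ (fderiv ℝ φ) x w v := by
  have hdiff : DifferentiableAt ℝ (fderiv ℝ φ) x :=
    (hφ.fderiv_right (m := 1) le_rfl).differentiable one_ne_zero x
  rw [fderiv_clm_apply hdiff (differentiableAt_const v)]
  simp

theorem laplacian_eq_bilinearTrace {φ : 𝔼 → ℝ} (hφ : ContDiff ℝ 2 φ) :
    laplacian d φ = fun x => bilinearTrace d (fderiv ℝ (fderiv ℝ φ) x) := by
  funext x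
  rw [bilinearTrace_apply]
  exact Finset.sum_congr rfl fun i _ => fderiv_fderiv_apply hφ x _ _

theorem continuous_laplacian {φ : 𝔼 → ℝ} (hφ : ContDiff ℝ 2 φ) : Continuous (laplacian d φ) := by
  rw [laplacian_eq_bilinearTrace hφ]
  have hφ' : ContDiff ℝ 1 (fderiv ℝ φ) := hφ.fderiv_right le_rfl
  exact (bilinearTrace d).continuous.comp (hφ'.continuous_fderiv one_ne_zero)

theorem hasCompactSupport_laplacian {φ : 𝔼 → ℝ} (hφ : ContDiff ℝ 2 φ)
    (hφs : HasCompactSupport φ) : HasCompactSupport (laplacian d φ) := by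
  rw [laplacian_eq_bilinearTrace hφ]
  exact ((hφs.fderiv ℝ).fderiv ℝ).comp_left (map_zero (bilinearTrace d))

theorem laplacian_comp_add_right (φ : 𝔼 → ℝ) (z x : 𝔼) :
    laplacian d (fun y => φ (y + z)) x = laplacian d φ (x + z) := by
  refine Finset.sum_congr rfl fun i _ => ?_
  simp only [secondPartial, fderiv_comp_add_right]
  rw [fderiv_comp_add_right (f := fun y => fderiv ℝ φ y (EuclideanSpace.single i 1)) z]

theorem fderiv_convolution_lsmul_apply {E : Type*} [NormedAddCommGroup E] [NormedSpace ℝ E]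
    [FiniteDimensional ℝ E] [MeasurableSpace E] [BorelSpace E] {μ : Measure E}
    [μ.IsAddHaarMeasure] {f h : E → ℝ} (hf : LocallyIntegrable f μ) (hh : ContDiff ℝ 1 h)
    (hhs : HasCompactSupport h) (x v : E) :
    fderiv ℝ (f ⋆[lsmul ℝ ℝ, μ] h) x v = (f ⋆[lsmul ℝ ℝ, μ] fun z => fderiv ℝ h z v) x := by
  rw [fderiv_convolution_right hf hh hhs,
    convolution_precompR_apply (lsmul ℝ ℝ) hf (hhs.fderiv ℝ) (hh.continuous_fderiv one_ne_zero)]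

theorem laplacian_convolution {f h : 𝔼 → ℝ} (hf : LocallyIntegrable f) (hh : ContDiff ℝ 2 h)
    (hhs : HasCompactSupport h) :
    laplacian d (f ⋆[lsmul ℝ ℝ, volume] h) = f ⋆[lsmul ℝ ℝ, volume] laplacian d h := by
  have hpartial : ∀ i, ContDiff ℝ 1 fun z => fderiv ℝ h z (EuclideanSpace.single i 1) := fun i =>
    (hh.fderiv_right le_rfl).clm_apply contDiff_const
  have hpartial_supp : ∀ i, HasCompactSupport fun z => fderiv ℝ h z (EuclideanSpace.single i 1) :=
    fun i => hhs.fderiv_apply ℝ _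
  have hexists : ∀ i, ConvolutionExists f (secondPartial d h i i) (lsmul ℝ ℝ) volume := fun i =>
    ((hpartial_supp i).fderiv_apply ℝ _).convolutionExists_right _ hf
      (((hpartial i).continuous_fderiv one_ne_zero).clm_apply continuous_const)
  funext x
  calc laplacian d (f ⋆[lsmul ℝ ℝ, volume] h) x
      = ∑ i, (f ⋆[lsmul ℝ ℝ, volume] secondPartial d h i i) x := by
        refine Finset.sum_congr rfl fun i _ => ?_
        simp only [secondPartial, fderiv_convolution_lsmul_apply hf (hh.of_le one_le_two) hhs]
        exact fderiv_convolution_lsmul_apply hf (hpartial i) (hpartial_supp i) _ _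
    _ = (f ⋆[lsmul ℝ ℝ, volume] laplacian d h) x := by
        simp only [convolution_lsmul, laplacian, Finset.smul_sum]
        exact (integral_finsetSum _ fun i _ => hexists i x).symm

theorem laplacian_crossCorrelation {f h : 𝔼 → ℝ} (hf : LocallyIntegrable f) (hh : ContDiff ℝ 2 h)
    (hhs : HasCompactSupport h) :
    laplacian d (crossCorrelation volume f h) = crossCorrelation volume f (laplacian d h) := by
  simp only [crossCorrelation_eq_convolution]
  exact laplacian_convolution (locallyIntegrable_comp_neg hf) hh hhs

end Laplacian

section HeatKernel

variable {d : ℕ} {t : ℝ}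

local notation "𝔼" => EuclideanSpace ℝ (Fin d)

theorem heatKernel_nonneg (ht : 0 ≤ t) (y : 𝔼) : 0 ≤ heatKernel d t y := by
  unfold heatKernel
  positivity

@[fun_prop]
theorem continuous_heatKernel : Continuous (heatKernel d t) := by
  unfold heatKernel
  fun_prop

theorem heatKernel_neg (y : 𝔼) : heatKernel d t (-y) = heatKernel d t y := by
  simp only [heatKernel, norm_neg]

theorem hasFDerivAt_heatKernel (y : 𝔼) :
    HasFDerivAt (heatKernel d t) (-(heatKernel d t y / t) • innerSL ℝ y) y := by
  have hsq : HasFDerivAt (fun z : 𝔼 => ‖z‖ ^ 2) (2 • innerSL ℝ y) y :=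
    (hasStrictFDerivAt_norm_sq y).hasFDerivAt
  refine (((hsq.neg.mul_const (2 * t)⁻¹).exp).const_mul
    ((2 * Real.pi * t) ^ (-(d : ℝ) / 2))).congr_fderiv ?_
  ext v
  simp only [heatKernel, div_eq_mul_inv, Pi.neg_apply, neg_apply, smul_apply, coe_innerSL_apply,
    nsmul_eq_mul, Nat.cast_ofNat, smul_eq_mul]
  ring

theorem integrable_exp_neg_mul_sq_norm {V : Type*} [NormedAddCommGroup V] [InnerProductSpace ℝ V]
    [FiniteDimensional ℝ V] [MeasurableSpace V] [BorelSpace V] {b : ℝ} (hb : 0 < b) :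
    Integrable fun v : V => Real.exp (-b * ‖v‖ ^ 2) := by
  refine Integrable.of_integral_ne_zero ?_
  rw [GaussianFourier.integral_rexp_neg_mul_sq_norm hb]
  positivity

theorem exists_one_add_pow_mul_exp_le {b : ℝ} (hb : 0 < b) (n : ℕ) :
    ∃ C, ∀ x : ℝ, 0 ≤ x →
      (1 + x) ^ n * Real.exp (-b * x ^ 2) ≤ C * Real.exp (-(b / 2) * x ^ 2) := by
  refine ⟨n.factorial * Real.exp (1 + 1 / (2 * b)), fun x hx => ?_⟩
  have hpow : (1 + x) ^ n ≤ n.factorial * Real.exp (1 + x) := by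
    rw [mul_comm, ← div_le_iff₀ (by positivity)]
    exact Real.pow_div_factorial_le_exp _ (by positivity) n
  have hexponent : 1 + x + -b * x ^ 2 ≤ 1 + 1 / (2 * b) + -(b / 2) * x ^ 2 := by
    have hsq : 1 / (2 * b) - x + b / 2 * x ^ 2 = (b * x - 1) ^ 2 / (2 * b) := by
      field_simp
      ring
    have hnonneg : 0 ≤ (b * x - 1) ^ 2 / (2 * b) := by positivity
    linarith
  calc (1 + x) ^ n * Real.exp (-b * x ^ 2)
      ≤ n.factorial * Real.exp (1 + x) * Real.exp (-b * x ^ 2) := by gcongr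
    _ = n.factorial * Real.exp (1 + x + -b * x ^ 2) := by rw [Real.exp_add _ (-b * x ^ 2)]; ring
    _ ≤ n.factorial * Real.exp (1 + 1 / (2 * b) + -(b / 2) * x ^ 2) := by gcongr
    _ = n.factorial * Real.exp (1 + 1 / (2 * b)) * Real.exp (-(b / 2) * x ^ 2) := by
      rw [Real.exp_add _ (-(b / 2) * x ^ 2)]; ring

theorem heatKernel_eq_mul_exp (y : 𝔼) :
    heatKernel d t y =
      (2 * Real.pi * t) ^ (-(d : ℝ) / 2) * Real.exp (-(1 / (2 * t)) * ‖y‖ ^ 2) := by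
  unfold heatKernel
  congr 2
  ring

theorem integrable_one_add_norm_pow_mul_heatKernel (ht : 0 < t) (n : ℕ) :
    Integrable fun y : 𝔼 => (1 + ‖y‖) ^ n * heatKernel d t y := by
  have hb : 0 < 1 / (2 * t) := by positivity
  obtain ⟨C, hC⟩ := exists_one_add_pow_mul_exp_le hb n
  refine ((integrable_exp_neg_mul_sq_norm (V := 𝔼) (half_pos hb)).const_mul
    ((2 * Real.pi * t) ^ (-(d : ℝ) / 2) * C)).mono'
    (Continuous.aestronglyMeasurable (by fun_prop)) (Eventually.of_forall fun y => ?_)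
  rw [Real.norm_of_nonneg (mul_nonneg (by positivity) (heatKernel_nonneg ht.le y)),
    heatKernel_eq_mul_exp, mul_left_comm, mul_assoc (_ ^ _) C]
  exact mul_le_mul_of_nonneg_left (hC ‖y‖ (norm_nonneg y)) (by positivity)

theorem HasPolynomialGrowth.integrable_mul_heatKernel {g : 𝔼 → ℝ} (hg : HasPolynomialGrowth g)
    (hgm : AEStronglyMeasurable g volume) (ht : 0 < t) :
    Integrable fun y => g y * heatKernel d t y := by
  obtain ⟨C, n, hC⟩ := hg
  refine ((integrable_one_add_norm_pow_mul_heatKernel ht n).const_mul C).mono'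
    (hgm.mul continuous_heatKernel.aestronglyMeasurable) (Eventually.of_forall fun y => ?_)
  rw [norm_mul, Real.norm_of_nonneg (heatKernel_nonneg ht.le y), ← mul_assoc]
  exact mul_le_mul_of_nonneg_right (hC y) (heatKernel_nonneg ht.le y)

theorem integral_heatKernel (ht : 0 < t) : ∫ y, heatKernel d t y = 1 := by
  simp only [heatKernel_eq_mul_exp]
  rw [integral_const_mul, GaussianFourier.integral_rexp_neg_mul_sq_norm (by positivity),
    finrank_euclideanSpace_fin, show Real.pi / (1 / (2 * t)) = 2 * Real.pi * t by field_simp,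
    ← Real.rpow_add (by positivity), neg_div, neg_add_cancel, Real.rpow_zero]

theorem integral_inner_mul_heatKernel {q : 𝔼 → ℝ} (hq : ContDiff ℝ 1 q)
    (hqg : HasPolynomialGrowth q) (hqg' : HasPolynomialGrowth (fderiv ℝ q)) (ht : 0 < t) (v : 𝔼) :
    ∫ y, inner ℝ v y * q y * heatKernel d t y = t * ∫ y, fderiv ℝ q y v * heatKernel d t y := by
  have hfderiv : ∀ y, fderiv ℝ (heatKernel d t) y v = -(heatKernel d t y / t * inner ℝ v y) :=
    fun y => by simp [(hasFDerivAt_heatKernel y).fderiv, real_inner_comm]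
  have hparts := integral_mul_fderiv_eq_neg_fderiv_mul_of_integrable (μ := volume) (f := q)
    (g := heatKernel d t) (v := v)
    ((hqg'.clm_comp (apply ℝ ℝ v)).integrable_mul_heatKernel
      (((hq.continuous_fderiv one_ne_zero).clm_apply continuous_const).aestronglyMeasurable) ht)
    ?_ (hqg.integrable_mul_heatKernel hq.continuous.aestronglyMeasurable ht)
    (fun y _ => hq.differentiable one_ne_zero y)
    (fun y _ => (hasFDerivAt_heatKernel y).differentiableAt)
  · rw [← neg_eq_iff_eq_neg, ← integral_neg] at hparts
    rw [← hparts, ← integral_const_mul]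
    refine integral_congr_ae (Eventually.of_forall fun y => ?_)
    simp only [hfderiv]
    field_simp
  · have hinner : HasPolynomialGrowth fun y : 𝔼 => -(1 / t) * (inner ℝ v y * q y) :=
      ((HasPolynomialGrowth.id.clm_comp (innerSL ℝ v)).mul hqg).const_mul _
    refine (hinner.integrable_mul_heatKernel
      (Continuous.aestronglyMeasurable (by have := hq.continuous; fun_prop)) ht).congr
      (Eventually.of_forall fun y => ?_)
    simp only [hfderiv]
    ring

theorem heatKernel_sqrt_smul (ht : 0 < t) (w : 𝔼) :
    heatKernel d t (√t • w) = (√t ^ d)⁻¹ * heatKernel d 1 w := by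
  have hscale : t ^ (-(d : ℝ) / 2) = (√t ^ d)⁻¹ := by
    rw [Real.sqrt_eq_rpow, ← Real.rpow_natCast, ← Real.rpow_mul ht.le, ← Real.rpow_neg ht.le]
    congr 1
    ring
  simp only [heatKernel, norm_smul, Real.norm_of_nonneg (Real.sqrt_nonneg t), mul_pow,
    Real.sq_sqrt ht.le]
  rw [Real.mul_rpow (by positivity) ht.le, hscale, mul_one, mul_one,
    show -(t * ‖w‖ ^ 2) / (2 * t) = -‖w‖ ^ 2 / 2 by field_simp]
  ring

/-- The mean of `g` under the Gaussian of centre `x` and standard deviation `r`. It equals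
`P_{r²} g x` for `r > 0`, and unlike `P_s g x` as a function of `s` it is as smooth in `r` as `g`,
also at `r = 0`. -/
noncomputable def gaussianMean (d : ℕ) (g : EuclideanSpace ℝ (Fin d) → ℝ)
    (x : EuclideanSpace ℝ (Fin d)) (r : ℝ) : ℝ :=
  ∫ w, g (x + r • w) * heatKernel d 1 w

theorem gaussianMean_zero (g : 𝔼 → ℝ) (x : 𝔼) : gaussianMean d g x 0 = g x := by
  simp only [gaussianMean, zero_smul, add_zero, integral_const_mul, integral_heatKernel one_pos,
    mul_one]

theorem heatSemigroup_eq_gaussianMean (ht : 0 < t) (g : 𝔼 → ℝ) (x : 𝔼) :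
    heatSemigroup d t g x = gaussianMean d g x √t := by
  have hpos : 0 < √t ^ d := by positivity
  have hsubst := Measure.integral_comp_smul (μ := volume)
    (fun z : 𝔼 => g (x + z) * heatKernel d t z) √t
  simp only [heatKernel_sqrt_smul ht, mul_left_comm _ (√t ^ d)⁻¹, finrank_euclideanSpace_fin,
    abs_of_pos (inv_pos.2 hpos), smul_eq_mul, integral_const_mul] at hsubst
  exact (mul_left_cancel₀ (inv_pos.2 hpos).ne' hsubst).symm

theorem abs_le_add_one_of_mem_ball {r r' : ℝ} (hr' : r' ∈ ball r 1) : |r'| ≤ |r| + 1 := by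
  rw [mem_ball, Real.dist_eq] at hr'
  linarith [abs_sub_abs_le_abs_sub r' r]

theorem continuous_gaussianMean {g : 𝔼 → ℝ} (hg : Continuous g) (hgg : HasPolynomialGrowth g)
    (x : 𝔼) : Continuous (gaussianMean d g x) := by
  refine continuous_iff_continuousAt.2 fun r => ?_
  obtain ⟨C, n, hC⟩ := hgg.exists_norm_add_smul_le x (|r| + 1)
  refine continuousAt_of_dominated
    (bound := fun w => C * ((1 + ‖w‖) ^ n * heatKernel d 1 w))
    (Eventually.of_forall fun r' => Continuous.aestronglyMeasurable (by fun_prop)) ?_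
    ((integrable_one_add_norm_pow_mul_heatKernel one_pos n).const_mul C)
    (Eventually.of_forall fun w => by fun_prop)
  filter_upwards [ball_mem_nhds r one_pos] with r' hr'
  refine Eventually.of_forall fun w => ?_
  rw [norm_mul, Real.norm_of_nonneg (heatKernel_nonneg zero_le_one w), ← mul_assoc]
  exact mul_le_mul_of_nonneg_right (hC r' (abs_le_add_one_of_mem_ball hr') w)
    (heatKernel_nonneg zero_le_one w)

theorem hasDerivAt_gaussianMean_fderiv {G : 𝔼 → ℝ} (hG : ContDiff ℝ 1 G)
    (hGg : HasPolynomialGrowth G) (hGg' : HasPolynomialGrowth (fderiv ℝ G)) (x : 𝔼) (r : ℝ) :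
    HasDerivAt (gaussianMean d G x)
      (∫ w, fderiv ℝ G (x + r • w) w * heatKernel d 1 w) r := by
  have hGc := hG.continuous
  obtain ⟨C, n, hC⟩ := hGg'.exists_norm_add_smul_le x (|r| + 1)
  refine (hasDerivAt_integral_of_dominated_loc_of_deriv_le (ball_mem_nhds r one_pos)
    (F' := fun r w => fderiv ℝ G (x + r • w) w * heatKernel d 1 w)
    (bound := fun w => C * ((1 + ‖w‖) ^ (n + 1) * heatKernel d 1 w))
    (Eventually.of_forall fun r' => Continuous.aestronglyMeasurable (by fun_prop))
    ((hGg.comp_add_smul x r).integrable_mul_heatKernel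
      (Continuous.aestronglyMeasurable (by fun_prop)) one_pos)
    (Continuous.aestronglyMeasurable (by fun_prop))
    (Eventually.of_forall fun w r' hr' => ?_)
    ((integrable_one_add_norm_pow_mul_heatKernel one_pos (n + 1)).const_mul C)
    (Eventually.of_forall fun w r' _ => ?_)).2
  · rw [norm_mul, Real.norm_of_nonneg (heatKernel_nonneg zero_le_one w), ← mul_assoc]
    refine mul_le_mul_of_nonneg_right ?_ (heatKernel_nonneg zero_le_one w)
    have hbound := hC r' (abs_le_add_one_of_mem_ball hr') w
    calc ‖fderiv ℝ G (x + r' • w) w‖ ≤ ‖fderiv ℝ G (x + r' • w)‖ * ‖w‖ := le_opNorm _ _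
      _ ≤ C * (1 + ‖w‖) ^ n * (1 + ‖w‖) :=
        mul_le_mul hbound (by linarith) (norm_nonneg w) ((norm_nonneg _).trans hbound)
      _ = C * (1 + ‖w‖) ^ (n + 1) := by ring
  · have hline : HasDerivAt (fun r : ℝ => x + r • w) w r' := by
      simpa using ((hasDerivAt_id r').smul_const w).const_add x
    exact ((hG.differentiable one_ne_zero _).hasFDerivAt.comp_hasDerivAt r' hline).mul_const _

theorem integral_inner_mul_apply_mul_heatKernel {q : 𝔼 → 𝔼 →L[ℝ] ℝ} (hq : ContDiff ℝ 1 q)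
    (hqg : HasPolynomialGrowth q) (hqg' : HasPolynomialGrowth (fderiv ℝ q)) (ht : 0 < t) (v : 𝔼) :
    ∫ y, inner ℝ v y * q y v * heatKernel d t y =
      t * ∫ y, fderiv ℝ q y v v * heatKernel d t y := by
  have hfderiv : fderiv ℝ (fun y => q y v) =
      fun y => compL ℝ 𝔼 (𝔼 →L[ℝ] ℝ) ℝ (apply ℝ ℝ v) (fderiv ℝ q y) := funext fun y =>
    ((apply ℝ ℝ v).hasFDerivAt.comp y (hq.differentiable one_ne_zero y).hasFDerivAt).fderiv
  have hgrowth' : HasPolynomialGrowth (fderiv ℝ fun y => q y v) := by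
    rw [hfderiv]
    exact hqg'.clm_comp _
  rw [integral_inner_mul_heatKernel (hq.clm_apply contDiff_const)
    (hqg.clm_comp (apply ℝ ℝ v)) hgrowth' ht, hfderiv]
  rfl

theorem integral_apply_self_mul_heatKernel {q : 𝔼 → 𝔼 →L[ℝ] ℝ} (hq : ContDiff ℝ 1 q)
    (hqg : HasPolynomialGrowth q) (hqg' : HasPolynomialGrowth (fderiv ℝ q)) (ht : 0 < t) :
    ∫ y, q y y * heatKernel d t y =
      t * ∫ y, bilinearTrace d (fderiv ℝ q y) * heatKernel d t y := by
  let e : Fin d → 𝔼 := fun i => EuclideanSpace.single i 1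
  have hqc := hq.continuous
  have hexpand : ∀ y, q y y = ∑ i, inner ℝ (e i) y * q y (e i) := fun y => by
    conv_lhs => enter [2]; rw [← (EuclideanSpace.basisFun (Fin d) ℝ).sum_repr' y]
    simp [e]
  have hint : ∀ i, Integrable fun y => inner ℝ (e i) y * q y (e i) * heatKernel d t y := fun i =>
    ((HasPolynomialGrowth.id.clm_comp (innerSL ℝ (e i))).mul
      (hqg.clm_comp (apply ℝ ℝ (e i)))).integrable_mul_heatKernel
        (Continuous.aestronglyMeasurable (by fun_prop)) ht
  have hint' : ∀ i, Integrable fun y => fderiv ℝ q y (e i) (e i) * heatKernel d t y := fun i =>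
    ((hqg'.clm_comp (apply ℝ (𝔼 →L[ℝ] ℝ) (e i))).clm_comp
      (apply ℝ ℝ (e i))).integrable_mul_heatKernel
        (Continuous.aestronglyMeasurable (by fun_prop)) ht
  simp only [hexpand, bilinearTrace_apply, Finset.sum_mul]
  rw [integral_finsetSum _ fun i _ => hint i, integral_finsetSum _ fun i _ => hint' i,
    Finset.mul_sum]
  exact Finset.sum_congr rfl fun i _ => integral_inner_mul_apply_mul_heatKernel hq hqg hqg' ht (e i)

theorem hasDerivAt_gaussianMean {G : 𝔼 → ℝ} (hG : ContDiff ℝ 2 G) (hGg : HasPolynomialGrowth G)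
    (hGg' : HasPolynomialGrowth (fderiv ℝ G))
    (hGg'' : HasPolynomialGrowth (fderiv ℝ (fderiv ℝ G))) (x : 𝔼) (r : ℝ) :
    HasDerivAt (gaussianMean d G x) (r * gaussianMean d (laplacian d G) x r) r := by
  have hG' : ContDiff ℝ 1 (fderiv ℝ G) := hG.fderiv_right le_rfl
  have hchain : fderiv ℝ (fun w => fderiv ℝ G (x + r • w)) =
      fun w => r • fderiv ℝ (fderiv ℝ G) (x + r • w) := funext fun w => by
    have haffine : HasFDerivAt (fun w : 𝔼 => x + r • w) (r • ContinuousLinearMap.id ℝ 𝔼) w :=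
      ((hasFDerivAt_id w).const_smul r).const_add x
    refine ((hG'.differentiable one_ne_zero _).hasFDerivAt.comp w haffine).fderiv.trans ?_
    ext v
    simp
  have hstein := integral_apply_self_mul_heatKernel (d := d)
    (q := fun w => fderiv ℝ G (x + r • w)) (hG'.comp (by fun_prop)) (hGg'.comp_add_smul x r)
    (by rw [hchain]
        exact (hGg''.comp_add_smul x r).clm_comp (r • ContinuousLinearMap.id ℝ _)) one_pos
  refine (hasDerivAt_gaussianMean_fderiv (hG.of_le one_le_two) hGg hGg' x r).congr_deriv ?_
  rw [hstein, hchain, one_mul, gaussianMean, laplacian_eq_bilinearTrace hG, ← integral_const_mul]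
  simp only [map_smul, smul_eq_mul, mul_assoc]

theorem heatSemigroup_sub_self {G : 𝔼 → ℝ} (hG : ContDiff ℝ 2 G) (hGg : HasPolynomialGrowth G)
    (hGg' : HasPolynomialGrowth (fderiv ℝ G))
    (hGg'' : HasPolynomialGrowth (fderiv ℝ (fderiv ℝ G))) (x : 𝔼) (ht : 0 < t) :
    heatSemigroup d t G x - G x =
      ∫ s in (0 : ℝ)..t, 1 / 2 * heatSemigroup d s (laplacian d G) x := by
  have hderiv := hasDerivAt_gaussianMean hG hGg hGg' hGg'' x
  have hmean : Continuous (gaussianMean d G x) :=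
    continuous_iff_continuousAt.2 fun r => (hderiv r).continuousAt
  have hlap : HasPolynomialGrowth (laplacian d G) := by
    rw [laplacian_eq_bilinearTrace hG]
    exact hGg''.clm_comp _
  have hlapMean := continuous_gaussianMean (continuous_laplacian hG) hlap x
  have hsqrt : ∀ s ∈ Set.Ioo 0 t, HasDerivAt (fun s => gaussianMean d G x √s)
      (1 / 2 * gaussianMean d (laplacian d G) x √s) s := fun s hs => by
    have hpos : 0 < √s := Real.sqrt_pos.2 hs.1
    refine ((hderiv √s).comp s (Real.hasDerivAt_sqrt hs.1.ne')).congr_deriv ?_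
    field_simp
  calc heatSemigroup d t G x - G x = gaussianMean d G x √t - gaussianMean d G x √0 := by
        rw [heatSemigroup_eq_gaussianMean ht, Real.sqrt_zero, gaussianMean_zero]
    _ = ∫ s in (0 : ℝ)..t, 1 / 2 * gaussianMean d (laplacian d G) x √s :=
      (intervalIntegral.integral_eq_sub_of_hasDerivAt_of_le ht.le
        (hmean.comp Real.continuous_sqrt).continuousOn hsqrt
        ((hlapMean.comp Real.continuous_sqrt).const_mul _ |>.intervalIntegrable _ _)).symm
    _ = ∫ s in (0 : ℝ)..t, 1 / 2 * heatSemigroup d s (laplacian d G) x := by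
      refine intervalIntegral.integral_congr_ae (Eventually.of_forall fun s hs => ?_)
      rw [Set.uIoc_of_le ht.le] at hs
      rw [heatSemigroup_eq_gaussianMean hs.1]

end HeatKernel

section HalfLaplacian

variable {d : ℕ} {t : ℝ}

local notation "𝔼" => EuclideanSpace ℝ (Fin d)

theorem heatSemigroup_eq_crossCorrelation (g : 𝔼 → ℝ) :
    heatSemigroup d t g = crossCorrelation volume (heatKernel d t) g := by
  funext x
  simp only [heatSemigroup, crossCorrelation, mul_comm, add_comm]

theorem heatSemigroup_apply_zero (g : 𝔼 → ℝ) :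
    heatSemigroup d t g 0 = ∫ z, heatKernel d t z * g z := by
  simp only [heatSemigroup, zero_add, mul_comm]

theorem integrable_mul_heatKernel_mul_comp_add {f h : 𝔼 → ℝ} (hf : HasPolynomialGrowth f)
    (hfm : AEStronglyMeasurable f volume) (hh : Continuous h) (hhs : HasCompactSupport h)
    (ht : 0 < t) :
    Integrable (fun p : 𝔼 × 𝔼 => h p.1 * heatKernel d t p.2 * f (p.1 + p.2))
      (volume.prod volume) := by
  obtain ⟨C, n, -, hC⟩ := hf.exists_norm_add_le
  have hweight : Integrable fun x => ‖h x‖ * (C * (1 + ‖x‖) ^ n) :=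
    (hh.norm.mul (by fun_prop)).integrable_of_hasCompactSupport hhs.norm.mul_right
  refine (hweight.mul_prod (integrable_one_add_norm_pow_mul_heatKernel ht n)).mono'
    (AEStronglyMeasurable.mul (Continuous.aestronglyMeasurable (by fun_prop))
      (hfm.comp_quasiMeasurePreserving (quasiMeasurePreserving_add _ _)))
    (Eventually.of_forall fun ⟨x, z⟩ => ?_)
  have hk := heatKernel_nonneg (d := d) ht.le z
  calc ‖h x * heatKernel d t z * f (x + z)‖ = ‖h x‖ * heatKernel d t z * ‖f (x + z)‖ := by
        rw [norm_mul, norm_mul, Real.norm_of_nonneg hk]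
    _ ≤ ‖h x‖ * heatKernel d t z * (C * (1 + ‖x‖) ^ n * (1 + ‖z‖) ^ n) := by
        gcongr
        exact hC x z
    _ = ‖h x‖ * (C * (1 + ‖x‖) ^ n) * ((1 + ‖z‖) ^ n * heatKernel d t z) := by ring

theorem integral_mul_heatSemigroup_sub {f h : 𝔼 → ℝ} (hf : HasPolynomialGrowth f)
    (hfm : AEStronglyMeasurable f volume) (hh : Continuous h) (hhs : HasCompactSupport h)
    (ht : 0 < t) :
    ∫ x, h x * (heatSemigroup d t f x - f x) =
      heatSemigroup d t (crossCorrelation volume f h) 0 - crossCorrelation volume f h 0 := by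
  have hprod := integrable_mul_heatKernel_mul_comp_add hf hfm hh hhs ht
  have hint : Integrable fun x => h x * heatSemigroup d t f x := by
    refine hprod.integral_prod_left.congr (Eventually.of_forall fun x => ?_)
    simp only [heatSemigroup, ← integral_const_mul, mul_assoc, mul_comm]
  have hint' : Integrable fun x => h x * f x :=
    (hf.locallyIntegrable hfm).integrable_smul_left_of_hasCompactSupport hh hhs
  have hswap : ∫ x, h x * heatSemigroup d t f x =
      heatSemigroup d t (crossCorrelation volume f h) 0 := by
    rw [heatSemigroup_eq_crossCorrelation, integral_mul_crossCorrelation_comm hprod,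
      heatSemigroup_apply_zero, ← integral_neg_eq_self]
    simp only [heatKernel_neg, crossCorrelation_neg]
  simp only [mul_sub]
  rw [integral_sub hint hint', hswap]
  simp only [crossCorrelation, add_zero, mul_comm]

theorem exists_contDiff_hasCompactSupport_norm_le {E F : Type*} [NormedAddCommGroup E]
    [NormedSpace ℝ E] [HasContDiffBump E] [FiniteDimensional ℝ E] [NormedAddCommGroup F]
    {h : E → F} (hh : Continuous h) (hhs : HasCompactSupport h) :
    ∃ b : E → ℝ, ContDiff ℝ ∞ b ∧ HasCompactSupport b ∧ ∀ x, ‖h x‖ ≤ b x := by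
  obtain ⟨M, hM⟩ := hh.bounded_above_of_compact_support hhs
  obtain ⟨R, hRpos, hR⟩ := hhs.isCompact.isBounded.subset_closedBall_lt 0 (0 : E)
  let b : ContDiffBump (0 : E) := ⟨R, R + 1, hRpos, by linarith⟩
  refine ⟨fun x => M * b x, contDiff_const.mul b.contDiff, b.hasCompactSupport.mul_left,
    fun x => ?_⟩
  by_cases hx : x ∈ tsupport h
  · simpa only [b.one_of_mem_closedBall (hR hx), mul_one] using hM x
  · rw [image_eq_zero_of_notMem_tsupport hx, norm_zero]
    exact mul_nonneg ((norm_nonneg _).trans (hM 0)) b.nonneg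

/-- `ν` is half the distributional Laplacian `Δf / 2` of `f`, tested against `C_c^∞`. -/
def HasHalfLaplacian (f : 𝔼 → ℝ) (ν : Measure 𝔼) : Prop :=
  ∀ φ : 𝔼 → ℝ, ContDiff ℝ ∞ φ → HasCompactSupport φ →
    ∫ x, φ x ∂ν = 1 / 2 * ∫ x, f x * laplacian d φ x

namespace HasHalfLaplacian

variable {f h : EuclideanSpace ℝ (Fin d) → ℝ} {ν : Measure (EuclideanSpace ℝ (Fin d))}

theorem crossCorrelation_one_of_contDiff (hν : HasHalfLaplacian f ν) (hh : ContDiff ℝ ∞ h)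
    (hhs : HasCompactSupport h) (z : 𝔼) :
    crossCorrelation ν 1 h z = 1 / 2 * crossCorrelation volume f (laplacian d h) z := by
  have htranslate := hν (fun y => h (y + z)) (hh.comp (contDiff_id.add contDiff_const))
    (hhs.comp_homeomorph (Homeomorph.addRight z))
  simpa only [crossCorrelation, Pi.one_apply, one_mul, laplacian_comp_add_right] using htranslate

variable [IsLocallyFiniteMeasure ν]

theorem hasPolynomialGrowth_crossCorrelation_one (hν : HasHalfLaplacian f ν)
    (hf : HasPolynomialGrowth f) (hh : Continuous h) (hhs : HasCompactSupport h) :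
    HasPolynomialGrowth (crossCorrelation ν 1 h) := by
  obtain ⟨b, hb, hbs, hhb⟩ := exists_contDiff_hasCompactSupport_norm_le hh hhs
  have hb2 : ContDiff ℝ 2 b := hb.of_le (WithTop.coe_le_coe.2 le_top)
  have hgrowth : HasPolynomialGrowth fun z =>
      1 / 2 * crossCorrelation volume f (laplacian d b) z :=
    (hf.crossCorrelation (continuous_laplacian hb2)
      (hasCompactSupport_laplacian hb2 hbs)).const_mul _
  refine hgrowth.of_norm_le fun z => ?_
  rw [← hν.crossCorrelation_one_of_contDiff hb hbs]
  simp only [crossCorrelation, Pi.one_apply, one_mul]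
  exact (norm_integral_le_of_norm_le (integrable_comp_add_right hb.continuous hbs z)
    (Eventually.of_forall fun y => hhb (y + z))).trans (Real.le_norm_self _)

theorem integral_mul_crossCorrelation_one {ρ : 𝔼 → ℝ} (hν : HasHalfLaplacian f ν)
    (hf : LocallyIntegrable f) (hh : ContDiff ℝ 2 h) (hhs : HasCompactSupport h)
    (hρ : ContDiff ℝ ∞ ρ) (hρs : HasCompactSupport ρ) :
    ∫ z, ρ z * crossCorrelation ν 1 h z =
      ∫ z, ρ z * (1 / 2 * crossCorrelation volume f (laplacian d h) z) := by
  have hmollified : ∫ y, crossCorrelation volume ρ h y ∂ν =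
      1 / 2 * ∫ x, f x * laplacian d (crossCorrelation volume ρ h) x :=
    hν _ (contDiff_crossCorrelation_left hρ hρs hh.continuous.locallyIntegrable)
      (hasCompactSupport_crossCorrelation hρs hhs)
  calc ∫ z, ρ z * crossCorrelation ν 1 h z = ∫ y, crossCorrelation volume ρ h y ∂ν := by
        rw [← integral_mul_crossCorrelation_comm (integrable_mul_mul_comp_add (f := 1)
          (locallyIntegrable_const (1 : ℝ)) hρ.continuous hρs hh.continuous hhs)]
        simp only [Pi.one_apply, one_mul]
    _ = 1 / 2 * ∫ x, f x * crossCorrelation volume ρ (laplacian d h) x := by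
        rw [hmollified, laplacian_crossCorrelation hρ.continuous.locallyIntegrable hh hhs]
    _ = 1 / 2 * ∫ z, ρ z * crossCorrelation volume f (laplacian d h) z := by
        rw [integral_mul_crossCorrelation_comm (integrable_mul_mul_comp_add hf hρ.continuous hρs
          (continuous_laplacian hh) (hasCompactSupport_laplacian hh hhs))]
    _ = ∫ z, ρ z * (1 / 2 * crossCorrelation volume f (laplacian d h) z) := by
        simp only [mul_left_comm _ (1 / 2 : ℝ), integral_const_mul]

theorem crossCorrelation_one_ae_eq (hν : HasHalfLaplacian f ν) (hf : HasPolynomialGrowth f)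
    (hfm : AEStronglyMeasurable f volume) (hh : ContDiff ℝ 2 h) (hhs : HasCompactSupport h) :
    ∀ᵐ z, crossCorrelation ν 1 h z = 1 / 2 * crossCorrelation volume f (laplacian d h) z := by
  have hfi := hf.locallyIntegrable hfm
  have hleft : LocallyIntegrable (crossCorrelation ν 1 h) :=
    (hν.hasPolynomialGrowth_crossCorrelation_one hf hh.continuous hhs).locallyIntegrable
      (stronglyMeasurable_crossCorrelation stronglyMeasurable_one
        hh.continuous).aestronglyMeasurable
  have hright : Continuous (crossCorrelation volume f (laplacian d h)) :=
    (contDiff_crossCorrelation_right (n := 0) hfi (contDiff_zero.2 (continuous_laplacian hh))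
      (hasCompactSupport_laplacian hh hhs)).continuous
  exact ae_eq_of_integral_contDiff_smul_eq hleft (hright.const_mul _).locallyIntegrable
    fun ρ hρ hρs => hν.integral_mul_crossCorrelation_one hfi hh hhs hρ hρs

theorem integral_heatSemigroup (hν : HasHalfLaplacian f ν) (hf : HasPolynomialGrowth f)
    (hh : Continuous h) (hhs : HasCompactSupport h) (ht : 0 < t) :
    ∫ y, heatSemigroup d t h y ∂ν = heatSemigroup d t (crossCorrelation ν 1 h) 0 := by
  have habs := (hν.hasPolynomialGrowth_crossCorrelation_one hf hh.norm hhs.norm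
    ).integrable_mul_heatKernel
      (stronglyMeasurable_crossCorrelation stronglyMeasurable_one hh.norm).aestronglyMeasurable ht
  have hint : Integrable (fun p : 𝔼 × 𝔼 => (1 : 𝔼 → ℝ) p.1 * heatKernel d t p.2 * h (p.1 + p.2))
      (ν.prod volume) := by
    simp only [Pi.one_apply, one_mul]
    refine (integrable_prod_iff' (Continuous.aestronglyMeasurable (by fun_prop))).2
      ⟨Eventually.of_forall fun z => ?_, habs.congr (Eventually.of_forall fun z => ?_)⟩
    · exact (integrable_comp_add_right (μ := ν) hh hhs z).const_mul (heatKernel d t z)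
    · simp only [norm_mul, Real.norm_of_nonneg (heatKernel_nonneg ht.le z), integral_const_mul,
        crossCorrelation, Pi.one_apply, one_mul, mul_comm]
  rw [heatSemigroup_apply_zero, ← integral_mul_crossCorrelation_comm hint,
    heatSemigroup_eq_crossCorrelation]
  simp only [Pi.one_apply, one_mul]

end HasHalfLaplacian

end HalfLaplacian

theorem representation_theorem_general {d : ℕ} {f : EuclideanSpace ℝ (Fin d) → ℝ}
    (hf : HasPolynomialGrowth f) (hfm : AEStronglyMeasurable f volume)
    {ν : Measure (EuclideanSpace ℝ (Fin d))} [IsLocallyFiniteMeasure ν]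
    (hν : HasHalfLaplacian f ν) {h : EuclideanSpace ℝ (Fin d) → ℝ} (hh : ContDiff ℝ 2 h)
    (hhs : HasCompactSupport h) {t : ℝ} (ht : 0 < t) :
    ∫ x, h x * (heatSemigroup d t f x - f x) =
      ∫ s in (0 : ℝ)..t, ∫ y, heatSemigroup d s h y ∂ν := by
  have hfi := hf.locallyIntegrable hfm
  have hlap := hν.crossCorrelation_one_ae_eq hf hfm hh hhs
  rw [integral_mul_heatSemigroup_sub hf hfm hh.continuous hhs ht,
    heatSemigroup_sub_self (contDiff_crossCorrelation_right (n := 2) hfi hh hhs)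
      (hf.crossCorrelation hh.continuous hhs)
      (hf.fderiv_crossCorrelation hfi (hh.of_le one_le_two) hhs)
      (hf.fderiv_fderiv_crossCorrelation hfi hh hhs) 0 ht, laplacian_crossCorrelation hfi hh hhs]
  refine intervalIntegral.integral_congr_ae (Eventually.of_forall fun s hs => ?_)
  rw [Set.uIoc_of_le ht.le] at hs
  rw [hν.integral_heatSemigroup hf hh.continuous hhs hs.1, heatSemigroup_apply_zero,
    heatSemigroup_apply_zero, ← integral_const_mul]
  refine integral_congr_ae (hlap.mono fun z hz => ?_)
  simp only [hz]
  ring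

theorem representation_theorem (d : ℕ)
    (f : EuclideanSpace ℝ (Fin d) → ℝ) (hf : ConvexOn ℝ Set.univ f)
    (A B : ℝ) (hgrowth : ∀ y, |f y| ≤ A * ‖y‖ + B)
    (ν : Measure (EuclideanSpace ℝ (Fin d))) (hνfin : IsLocallyFiniteMeasure ν)
    (hν : ∀ φ : EuclideanSpace ℝ (Fin d) → ℝ, ContDiff ℝ (⊤ : ℕ∞) φ → HasCompactSupport φ →
      (∫ x, φ x ∂ν) = (1 / 2) * ∫ x, f x * laplacian d φ x)
    (h : EuclideanSpace ℝ (Fin d) → ℝ) (hh : ContDiff ℝ 2 h)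
    (hhsupp : HasCompactSupport h) (t : ℝ) (ht : 0 < t) :
    (∫ x, h x * (heatSemigroup d t f x - f x)) =
      ∫ s in (0:ℝ)..t, ∫ y, heatSemigroup d s h y ∂ν := by
  have hfc : Continuous f := continuousOn_univ.1 (hf.continuousOn isOpen_univ)
  exact representation_theorem_general (.of_norm_le_affine hgrowth) hfc.aestronglyMeasurable hν
    hh hhsupp ht
end
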